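/- arXiv:2411.10808 — 2 statements merged into one kernel-verified Lean document; each statement's English description precedes it below -/
import Mathlib

section
/- Let d ≥ 1, s ∈ ℝ^d, and let {R_k}_{k≥1} be a sequence of real d×d matrices. For each k ≥ 1 define the affine map T_k : ℝ^d → ℝ^d by T_k(z) = R_k z + s. Suppose there exists a real d×d matrix R_∞ such that: (i) every complex eigenvalue of R_∞ has modulus strictly less than 1; (ii) R_k → R_∞ entrywise as k → ∞; and (iii) there exists z̄ ∈ ℝ^d with T_k(z̄) = z̄ for all k ≥ 1. Then there exists a unique z* ∈ ℝ^d with T_k(z*) = z* for all k ≥ 1, and for every initialization z₀ ∈ ℝ^d the sequence defined by z_k = T_k(z_{k−1}) for k ≥ 1 converges linearly to z*: there exist C > 0, β ∈ [0,1), and K ≥ 1 such that ‖z_k − z*‖₂ ≤ C·β^k for all k ≥ K. -/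
open Filter Matrix

/-- The Euclidean (ℓ²) norm on `Fin d → ℝ`. -/
noncomputable def norm2 {d : ℕ} (x : Fin d → ℝ) : ℝ := Real.sqrt (∑ i, x i ^ 2)

section Aux

attribute [local instance] Matrix.linftyOpNormedRing Matrix.linftyOpNormedAlgebra

theorem aux_norm_map {d : ℕ} (A : Matrix (Fin d) (Fin d) ℝ) :
    ‖A.map Complex.ofReal‖ = ‖A‖ := by
  simp [Matrix.linfty_opNorm_def]

theorem aux_gelfand {d : ℕ} (hd : 1 ≤ d) (A : Matrix (Fin d) (Fin d) ℝ)
    (hspec : ∀ μ ∈ spectrum ℂ (A.map Complex.ofReal), ‖μ‖ < 1) :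
    ∃ m : ℕ, 1 ≤ m ∧ ‖A ^ m‖ < 1 := by
  have : Nonempty (Fin d) := ⟨⟨0, hd⟩⟩
  have : CompleteSpace (Matrix (Fin d) (Fin d) ℂ) := FiniteDimensional.complete ℂ _
  have h1 : spectralRadius ℂ (A.map Complex.ofReal) < (1 : NNReal) := by
    apply spectrum.spectralRadius_lt_of_forall_lt
    intro μ hμ
    exact_mod_cast hspec μ hμ
  have h2 := spectrum.pow_nnnorm_pow_one_div_tendsto_nhds_spectralRadius (A.map Complex.ofReal)
  obtain ⟨m, hm, hm1⟩ := ((h2.eventually (gt_mem_nhds h1)).and (eventually_ge_atTop 1)).exists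
  refine ⟨m, hm1, ?_⟩
  rw [← aux_norm_map]
  have h3 : (A ^ m).map Complex.ofReal = (A.map Complex.ofReal) ^ m :=
    map_pow (Complex.ofRealHom.mapMatrix) A m
  rw [h3]
  by_contra hcon
  push Not at hcon
  have h4 : (1 : ENNReal) ≤ (‖A.map Complex.ofReal ^ m‖₊ : ENNReal) := by
    exact_mod_cast hcon
  have h5 := ENNReal.one_le_rpow (z := 1 / (m : ℝ)) h4 (by positivity)
  exact absurd hm (not_lt.mpr (by simpa using h5))

/-- partial products -/
noncomputable def auxP {d : ℕ} (R : ℕ → Matrix (Fin d) (Fin d) ℝ) :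
    ℕ → ℕ → Matrix (Fin d) (Fin d) ℝ
  | 0, _ => 1
  | n + 1, k => R (k + n + 1) * auxP R n k

theorem auxP_tendsto {d : ℕ} (R : ℕ → Matrix (Fin d) (Fin d) ℝ) (A : Matrix (Fin d) (Fin d) ℝ)
    (h : Tendsto R atTop (nhds A)) (n : ℕ) : Tendsto (auxP R n) atTop (nhds (A ^ n)) := by
  induction n with
  | zero => simp [auxP]
  | succ n ih =>
    rw [pow_succ']
    exact ((tendsto_add_atTop_iff_nat (n + 1)).mpr h).mul ih

theorem auxP_apply {d : ℕ} (R : ℕ → Matrix (Fin d) (Fin d) ℝ) (e : ℕ → Fin d → ℝ)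
    (he : ∀ k, 1 ≤ k → e k = R k *ᵥ e (k - 1)) (n k : ℕ) : e (k + n) = auxP R n k *ᵥ e k := by
  induction n with
  | zero => simp [auxP]
  | succ n ih =>
    rw [he (k + (n + 1)) (by omega)]
    simp only [auxP, ← Matrix.mulVec_mulVec, ← ih]
    rfl

theorem aux_contract {d : ℕ} (hd : 1 ≤ d) (R : ℕ → Matrix (Fin d) (Fin d) ℝ)
    (A : Matrix (Fin d) (Fin d) ℝ)
    (hspec : ∀ μ ∈ spectrum ℂ (A.map Complex.ofReal), ‖μ‖ < 1)
    (hconv : ∀ i j, Tendsto (fun k => R k i j) atTop (nhds (A i j))) :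
    ∃ m : ℕ, 1 ≤ m ∧ ∃ q : ℝ, 0 < q ∧ q < 1 ∧ ∃ K : ℕ, ∀ e : ℕ → Fin d → ℝ,
      (∀ k, 1 ≤ k → e k = R k *ᵥ e (k - 1)) → ∀ k, K ≤ k → ‖e (k + m)‖ ≤ q * ‖e k‖ := by
  obtain ⟨m, hm, hlt⟩ := aux_gelfand hd A hspec
  have hR : Tendsto R atTop (nhds A) :=
    tendsto_pi_nhds.mpr fun i => tendsto_pi_nhds.mpr fun j => hconv i j
  obtain ⟨q, hq1, hq2⟩ := exists_between hlt
  have hev := (auxP_tendsto R A hR m).norm.eventually (gt_mem_nhds hq1)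
  obtain ⟨K, hK⟩ := eventually_atTop.mp hev
  refine ⟨m, hm, q, (norm_nonneg _).trans_lt hq1, hq2, K, fun e he k hk => ?_⟩
  rw [auxP_apply R e he]
  exact (Matrix.linfty_opNorm_mulVec _ _).trans
    (mul_le_mul_of_nonneg_right (hK k hk).le (norm_nonneg _))

theorem aux_norm2 {d : ℕ} (x : Fin d → ℝ) : norm2 x ≤ Real.sqrt d * ‖x‖ := by
  unfold norm2
  rw [← Real.sqrt_sq (norm_nonneg x), ← Real.sqrt_mul (by positivity)]
  apply Real.sqrt_le_sqrt
  calc ∑ i, x i ^ 2 ≤ ∑ _i : Fin d, ‖x‖ ^ 2 := by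
        apply Finset.sum_le_sum
        intro i _
        rw [← sq_abs]
        exact pow_le_pow_left₀ (abs_nonneg _) (norm_le_pi_norm x i) 2
    _ = _ := by simp

theorem aux_rate (a : ℕ → ℝ) (ha : ∀ k, 0 ≤ a k) (m K : ℕ) (hm : 1 ≤ m) (q : ℝ) (hq : 0 < q)
    (hq1 : q < 1) (h : ∀ k, K ≤ k → a (k + m) ≤ q * a k) :
    ∃ C, 0 < C ∧ ∃ β : ℝ, 0 ≤ β ∧ β < 1 ∧ ∀ k, a k ≤ C * β ^ k := by
  set β : ℝ := q ^ (1 / (m : ℝ)) with hβ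
  have hm0 : (0 : ℝ) < m := by exact_mod_cast hm
  have hβ0 : 0 < β := Real.rpow_pos_of_pos hq _
  have hβ1 : β < 1 := Real.rpow_lt_one hq.le hq1 (by positivity)
  have hβm : β ^ m = q := by
    rw [hβ, one_div]; exact Real.rpow_inv_natCast_pow hq.le (by omega)
  have hnn : ∀ i, 0 ≤ a i / β ^ i := fun i => div_nonneg (ha i) (by positivity)
  refine ⟨∑ i ∈ Finset.range (K + m), a i / β ^ i + 1,
    add_pos_of_nonneg_of_pos (Finset.sum_nonneg fun i _ => hnn i) one_pos, β, hβ0.le, hβ1, ?_⟩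
  set C := ∑ i ∈ Finset.range (K + m), a i / β ^ i + 1 with hC
  intro k
  induction k using Nat.strong_induction_on with
  | _ k ih =>
    by_cases hk : k < K + m
    · rw [← div_le_iff₀ (by positivity)]
      have := Finset.single_le_sum (f := fun i => a i / β ^ i) (fun i _ => hnn i)
        (Finset.mem_range.mpr hk)
      linarith
    · obtain ⟨j, rfl⟩ : ∃ j, k = j + m := ⟨k - m, by omega⟩
      have h1 := h j (by omega)
      have h2 := ih j (by omega)
      calc a (j + m) ≤ q * a j := h1
        _ ≤ q * (C * β ^ j) := mul_le_mul_of_nonneg_left h2 hq.le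
        _ = C * β ^ (j + m) := by rw [pow_add, hβm]; ring

end Aux

theorem stmt0 (d : ℕ) (hd : 1 ≤ d) (s : Fin d → ℝ)
    (R : ℕ → Matrix (Fin d) (Fin d) ℝ) (Rinf : Matrix (Fin d) (Fin d) ℝ)
    (hspec : ∀ μ ∈ spectrum ℂ (Rinf.map Complex.ofReal), ‖μ‖ < 1)
    (hconv : ∀ i j, Tendsto (fun k => R k i j) atTop (nhds (Rinf i j)))
    (hfix : ∃ zbar : Fin d → ℝ, ∀ k, 1 ≤ k → R k *ᵥ zbar + s = zbar) :
    ∃ zs : Fin d → ℝ,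
      (∀ k, 1 ≤ k → R k *ᵥ zs + s = zs) ∧
      (∀ zs' : Fin d → ℝ, (∀ k, 1 ≤ k → R k *ᵥ zs' + s = zs') → zs' = zs) ∧
      (∀ z : ℕ → (Fin d → ℝ), (∀ k, 1 ≤ k → z k = R k *ᵥ z (k - 1) + s) →
        ∃ C, 0 < C ∧ ∃ β, 0 ≤ β ∧ β < 1 ∧ ∃ K, 1 ≤ K ∧ ∀ k, K ≤ k →
          norm2 (z k - zs) ≤ C * β ^ k) := by
  obtain ⟨m, hm, q, hq, hq1, K, hK⟩ := aux_contract hd R Rinf hspec hconv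
  obtain ⟨zs, hzs⟩ := hfix
  refine ⟨zs, hzs, ?_, ?_⟩
  · intro zs' h'
    have h := hK (fun _ => zs' - zs) (fun k hk => by
      rw [Matrix.mulVec_sub]
      nth_rewrite 1 [← h' k hk, ← hzs k hk]
      abel) K le_rfl
    have h0 : ‖zs' - zs‖ = 0 := by nlinarith [norm_nonneg (zs' - zs)]
    exact sub_eq_zero.mp (norm_eq_zero.mp h0)
  · intro z hz
    have h := hK (fun k => z k - zs) (fun k hk => by
      rw [Matrix.mulVec_sub, hz k hk]
      nth_rewrite 1 [← hzs k hk]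
      abel)
    obtain ⟨C, hC, β, hβ, hβ1, hb⟩ :=
      aux_rate (fun k => ‖z k - zs‖) (fun k => norm_nonneg _) m K hm q hq hq1 h
    have hd0 : (0 : ℝ) < d := by exact_mod_cast hd
    refine ⟨Real.sqrt d * C, by positivity, β, hβ, hβ1, 1, le_rfl, fun k _ => ?_⟩
    rw [mul_assoc]
    exact (aux_norm2 _).trans (mul_le_mul_of_nonneg_left (hb k) (Real.sqrt_nonneg _))
end

section
/- Let P be a real n×n matrix such that every complex eigenvalue of P is real and lies in the interval [0,1). Define the real 2n×2n block matrix R = [[2P, −P], [I_n, 0_n]] (top-left block 2P, top-right block −P, bottom-left block the n×n identity, bottom-right block the n×n zero matrix). Then every complex eigenvalue of R has modulus strictly less than 1. -/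
open Matrix

lemma mem_spec_iff_aux {m : Type*} [Fintype m] [DecidableEq m] (M : Matrix m m ℂ) (z : ℂ) :
    z ∈ spectrum ℂ M ↔ ∃ v : m → ℂ, v ≠ 0 ∧ M *ᵥ v = z • v := by
  rw [← Matrix.spectrum_toLin', ← Module.End.hasEigenvalue_iff_mem_spectrum]
  constructor
  · intro h
    obtain ⟨v, hv⟩ := h.exists_hasEigenvector
    exact ⟨v, hv.2, by simpa using hv.apply_eq_smul⟩
  · rintro ⟨v, hv, h⟩
    exact Module.End.hasEigenvalue_of_hasEigenvector
      (x := v) ⟨Module.End.mem_eigenspace_iff.2 (by simpa using h), hv⟩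

lemma root_aux (z : ℂ) (r : ℝ) (h0 : 0 ≤ r) (h1 : r < 1) (h : z ^ 2 = r * (2 * z - 1)) :
    ‖z‖ < 1 := by
  have hre := congrArg Complex.re h
  have him := congrArg Complex.im h
  simp [pow_two] at hre him
  have key : z.re * z.re + z.im * z.im < 1 := by
    have : z.im * (z.re - r) = 0 := by linarith
    rcases mul_eq_zero.1 this with hb | hb
    · rw [hb] at hre ⊢
      have h2 : (z.re - r) ^ 2 + r * (1 - r) = 0 := by linarith
      have h3 : 0 ≤ r * (1 - r) := mul_nonneg h0 (by linarith)
      have h4 : (z.re - r) ^ 2 = 0 := by nlinarith [sq_nonneg (z.re - r)]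
      have h5 : z.re = r := by
        have := pow_eq_zero_iff (two_ne_zero) |>.1 h4
        linarith
      rw [h5]; nlinarith
    · have h5 : z.re = r := by linarith
      rw [h5] at hre ⊢
      nlinarith
  have h6 : ‖z‖ ^ 2 < 1 := by
    rw [← Complex.normSq_eq_norm_sq, Complex.normSq_apply]; exact key
  nlinarith [norm_nonneg z]

theorem stmt1 (n : ℕ) (P : Matrix (Fin n) (Fin n) ℝ)
    (hP : ∀ μ ∈ spectrum ℂ (P.map Complex.ofReal), ∃ r : ℝ, μ = (r : ℂ) ∧ 0 ≤ r ∧ r < 1) :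
    ∀ lam ∈ spectrum ℂ
      ((Matrix.fromBlocks ((2 : ℝ) • P) (-P)
        (1 : Matrix (Fin n) (Fin n) ℝ) (0 : Matrix (Fin n) (Fin n) ℝ)).map Complex.ofReal),
      ‖lam‖ < 1 := by
  intro z hz
  obtain ⟨v, hv, h⟩ := (mem_spec_iff_aux _ _).1 hz
  set Q := P.map Complex.ofReal with hQ
  have e1 : ((2 : ℝ) • P).map Complex.ofReal = (2 : ℂ) • Q := by
    ext i j; simp [hQ]
  have e2 : (-P).map Complex.ofReal = -Q := by
    ext i j; simp [hQ]
  have e3 : (1 : Matrix (Fin n) (Fin n) ℝ).map Complex.ofReal = 1 :=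
    Matrix.map_one _ (by simp) (by simp)
  have e4 : (0 : Matrix (Fin n) (Fin n) ℝ).map Complex.ofReal = 0 := by
    ext i j; simp
  rw [Matrix.fromBlocks_map, e1, e2, e3, e4, Matrix.fromBlocks_mulVec] at h
  set x := v ∘ Sum.inl with hx
  set y := v ∘ Sum.inr with hy
  have hX : ((2 : ℂ) • Q) *ᵥ x + (-Q) *ᵥ y = z • x := by
    ext i; simpa [hx] using congrFun h (Sum.inl i)
  have hY : x = z • y := by
    ext i; simpa [hx, hy] using congrFun h (Sum.inr i)
  have hy0 : y ≠ 0 := by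
    intro h0
    apply hv
    rw [h0, smul_zero] at hY
    ext i
    rcases i with i | i
    · exact congrFun hY i
    · exact congrFun h0 i
  rw [hY, Matrix.smul_mulVec, Matrix.mulVec_smul, Matrix.neg_mulVec, smul_smul, smul_smul] at hX
  have hk : (2 * z - 1) • (Q *ᵥ y) = (z * z) • y := by
    rw [← hX, sub_smul, one_smul, sub_eq_add_neg]
  by_cases hc : 2 * z - 1 = 0
  · rw [hc, zero_smul] at hk
    have : z * z = 0 := (smul_eq_zero.1 hk.symm).resolve_right hy0
    have : z = 0 := by simpa using this
    simp [this]
  · have hm : z * z / (2 * z - 1) ∈ spectrum ℂ Q := by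
      rw [mem_spec_iff_aux]
      refine ⟨y, hy0, ?_⟩
      rw [div_eq_inv_mul, mul_smul, ← hk, smul_smul, inv_mul_cancel₀ hc, one_smul]
    obtain ⟨r, hr, h0, h1⟩ := hP _ hm
    refine root_aux z r h0 h1 ?_
    rw [← hr, div_mul_cancel₀ _ hc, pow_two]
end
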